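/- Let R be a regular domain with a generalized regular system of parameters x = x_1,…,x_p, and let I, J ⊆ R be ideals. Then Γ_x(IJ) = Γ_x(I) + Γ_x(J), where + denotes the Minkowski sum. -/

import Mathlib

open Ideal Set Pointwise

noncomputable section

namespace NND

variable {R : Type*} [CommRing R] {p : ℕ}

/-- The monomial `x^a = x 0 ^ a 0 * ⋯` in the elements `x`. -/
def mono (x : Fin p → R) (a : Fin p → ℕ) : R := ∏ i, x i ^ a i

/-- A (commutative) ring is regular local if it is Noetherian local and its maximal ideal
can be generated by `dim R` elements. -/
def IsRegularLocal (A : Type*) [CommRing A] : Prop :=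
  IsNoetherianRing A ∧ ∃ h : IsLocalRing A, ∃ s : Finset A,
    Ideal.span (s : Set A) = @IsLocalRing.maximalIdeal A _ h ∧
    (s.card : WithBot (WithTop ℕ)) = ringKrullDim A

/-- A regular domain: an integral domain whose localization at every prime is regular local. -/
def IsRegularDomain (A : Type*) [CommRing A] : Prop :=
  IsDomain A ∧ ∀ (P : Ideal A) (hP : P.IsPrime), IsRegularLocal (@Localization.AtPrime A _ P hP)

/-- `x` is a regular sequence. -/
def IsRegSeq (x : Fin p → R) : Prop :=
  Ideal.span (Set.range x) ≠ ⊤ ∧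
  ∀ i : Fin p, ∀ r : R, r * x i ∈ Ideal.span (x '' {j | j < i}) →
    r ∈ Ideal.span (x '' {j | j < i})

/-- A generalized regular system of parameters: a permutable regular sequence all of whose
subquotients are regular domains. -/
def IsGRSOP (x : Fin p → R) : Prop :=
  (∀ σ : Equiv.Perm (Fin p), IsRegSeq (x ∘ σ)) ∧
  ∀ S : Set (Fin p), IsRegularDomain (R ⧸ Ideal.span (x '' S))

/-- `A` is the exponent set of a monomial representation of `f`:
`h * f = ∑_{a ∈ A} r a * x^a` with `h` and the `r a` outside `(x_1, …, x_p)`. -/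
def IsMonRep (x : Fin p → R) (f : R) (A : Finset (Fin p → ℕ)) : Prop :=
  ∃ (h : R) (r : (Fin p → ℕ) → R),
    h ∉ Ideal.span (Set.range x) ∧ (∀ a ∈ A, r a ∉ Ideal.span (Set.range x)) ∧
    h * f = ∑ a ∈ A, r a * mono x a

/-- A minimal (irredundant) monomial representation: no monomial divides another. -/
def IsMinMonRep (x : Fin p → R) (f : R) (A : Finset (Fin p → ℕ)) : Prop :=
  IsMonRep x f A ∧ ∀ a ∈ A, ∀ b ∈ A, a ≠ b → ¬ mono x a ∣ mono x b

open Classical in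
/-- The support of `f`: the exponent set of its (unique) minimal monomial representation. -/
def supp (x : Fin p → R) (f : R) : Set (Fin p → ℕ) :=
  if h : ∃ A : Finset (Fin p → ℕ), IsMinMonRep x f A then ↑h.choose else ∅

/-- Embedding of exponent vectors into `ℝ^p`. -/
def toR (a : Fin p → ℕ) : Fin p → ℝ := fun i => (a i : ℝ)

/-- The Newton polyhedron of a set of ring elements. -/
def Γ (x : Fin p → R) (S : Set R) : Set (Fin p → ℝ) :=
  convexHull ℝ (toR '' ⋃ f ∈ S, supp x f)

/-- The Newton polyhedron `Γ_x(I)` of an ideal. -/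
def ΓI (x : Fin p → R) (I : Ideal R) : Set (Fin p → ℝ) := Γ x (I : Set R)

/-- The Newton polyhedron `Γ_x(f)` of an element: that of the principal ideal `(f)`. -/
def ΓE (x : Fin p → R) (f : R) : Set (Fin p → ℝ) := ΓI x (Ideal.span {f})

/-- The integral closure of an ideal `I`: elements satisfying an equation of integral
dependence `f^n + a_1 f^{n-1} + ⋯ + a_n = 0` with `a_i ∈ I^i`. -/
def intClosure (I : Ideal R) : Set R :=
  {f | ∃ n : ℕ, 0 < n ∧ ∃ a : ℕ → R, (∀ i ∈ Finset.Icc 1 n, a i ∈ I ^ i) ∧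
    f ^ n + ∑ i ∈ Finset.Icc 1 n, a i * f ^ (n - i) = 0}

/-- The monomial ideal `I_0` spanned by the lattice points of `Γ_x(I)`. -/
def idealZero (x : Fin p → R) (I : Ideal R) : Ideal R :=
  Ideal.span (mono x '' {a | toR a ∈ ΓI x I})

/-- The ideal `K_I` generated by the monomials lying in the integral closure of `I`. -/
def KIdeal (x : Fin p → R) (I : Ideal R) : Ideal R :=
  Ideal.span {m | (∃ a : Fin p → ℕ, m = mono x a) ∧ m ∈ intClosure I}

/-- unit exponent vector -/
def ee (i : Fin p) : Fin p → ℕ := Pi.single i 1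

lemma mono_add (x : Fin p → R) (a b : Fin p → ℕ) : mono x (a + b) = mono x a * mono x b := by
  simp [mono, pow_add, Finset.prod_mul_distrib]

lemma mono_ee (x : Fin p → R) (i : Fin p) : mono x (ee i) = x i := by
  unfold mono ee
  rw [Finset.prod_eq_single i]
  · simp
  · intro b _ hb; simp [hb]
  · simp

lemma mono_zero (x : Fin p → R) : mono x 0 = 1 := by simp [mono]

lemma ee_decomp (a : Fin p → ℕ) (i : Fin p) (h : a i ≠ 0) : ∃ a', a = a' + ee i := by
  refine ⟨a - ee i, ?_⟩
  funext k
  by_cases hk : k = i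
  · subst hk; simp [ee]; omega
  · simp [ee, hk]

/-- regularity in usable form -/
lemma reg_of_grsop (x : Fin p → R) (hx : IsGRSOP x) (T : Set (Fin p)) (i : Fin p) (hi : i ∉ T)
    (r : R) (h : r * x i ∈ Ideal.span (x '' T)) : r ∈ Ideal.span (x '' T) := by
  classical
  let f : Fin p → ℕ := fun k => if k ∈ T then 0 else if k = i then 1 else 2
  let σ := Tuple.sort f
  have hm : Monotone (f ∘ σ) := Tuple.monotone_sort f
  have key : (x ∘ σ) '' {j | j < σ.symm i} = x '' T := by
    rw [Set.image_comp]
    congr 1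
    ext t
    constructor
    · rintro ⟨j, hj, rfl⟩
      have h1 := hm (le_of_lt hj)
      have h2 : σ j ≠ i := by
        intro h; rw [← h] at hj; simp at hj
      by_contra h3
      simp [f, hi, h3, h2] at h1
    · intro ht
      refine ⟨σ.symm t, ?_, by simp⟩
      by_contra h3
      have h1 := hm (not_lt.mp h3)
      simp [f, hi, ht] at h1
  have := (hx.1 σ).2 (σ.symm i) r
  rw [key] at this
  apply this
  simpa using h

/-- splitting off a variable -/
def B0 (B : Set (Fin p → ℕ)) (j : Fin p) : Set (Fin p → ℕ) := {b | b ∈ B ∧ b j = 0}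
def B1 (B : Set (Fin p → ℕ)) (j : Fin p) : Set (Fin p → ℕ) := {b | b + ee j ∈ B}

lemma span_split (x : Fin p → R) (B : Set (Fin p → ℕ)) (j : Fin p) (y : R)
    (hy : y ∈ Ideal.span (mono x '' B)) :
    ∃ k ∈ Ideal.span (mono x '' B0 B j), ∃ m ∈ Ideal.span (mono x '' B1 B j),
      y = k + m * x j := by
  induction hy using Submodule.span_induction with
  | mem y hy =>
    obtain ⟨b, hb, rfl⟩ := hy
    by_cases h : b j = 0
    · exact ⟨mono x b, Ideal.subset_span ⟨b, ⟨hb, h⟩, rfl⟩, 0, zero_mem _, by simp⟩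
    · obtain ⟨a, rfl⟩ := ee_decomp b j h
      exact ⟨0, zero_mem _, mono x a, Ideal.subset_span ⟨a, hb, rfl⟩, by
        rw [mono_add, mono_ee]; simp⟩
  | zero => exact ⟨0, zero_mem _, 0, zero_mem _, by simp⟩
  | add y z _ _ h1 h2 =>
    obtain ⟨k, hk, m, hm, rfl⟩ := h1
    obtain ⟨k', hk', m', hm', rfl⟩ := h2
    exact ⟨k + k', add_mem hk hk', m + m', add_mem hm hm', by ring⟩
  | smul c y _ h1 =>
    obtain ⟨k, hk, m, hm, rfl⟩ := h1
    exact ⟨c * k, Ideal.mul_mem_left _ _ hk, c * m, Ideal.mul_mem_left _ _ hm, by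
      simp; ring⟩

lemma span_B1_mul (x : Fin p → R) (B : Set (Fin p → ℕ)) (j : Fin p) (y : R)
    (hy : y ∈ Ideal.span (mono x '' B1 B j)) : y * x j ∈ Ideal.span (mono x '' B) := by
  induction hy using Submodule.span_induction with
  | mem y hy =>
    obtain ⟨b, hb, rfl⟩ := hy
    rw [← mono_ee x j, ← mono_add]
    exact Ideal.subset_span ⟨_, hb, rfl⟩
  | zero => simp
  | add y z _ _ h1 h2 => rw [add_mul]; exact add_mem h1 h2
  | smul c y _ h1 => rw [smul_eq_mul, mul_assoc]; exact Ideal.mul_mem_left _ _ h1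

lemma B0_sub (B : Set (Fin p → ℕ)) (j : Fin p) : B0 B j ⊆ B := fun _ h => h.1

lemma nzd (x : Fin p → R) (hx : IsGRSOP x) (n : ℕ) (S : Finset (Fin p)) :
    ∀ (T : Set (Fin p)) (B : Set (Fin p → ℕ)), (∀ t ∈ T, t ∉ S) →
    (∀ b ∈ B, ∀ k, b k ≤ n) → (∀ b ∈ B, ∀ j, j ∉ S → b j = 0) → ∀ i, i ∉ S → i ∉ T → ∀ r : R,
    r * x i ∈ Ideal.span (x '' T) ⊔ Ideal.span (mono x '' B) →
    r ∈ Ideal.span (x '' T) ⊔ Ideal.span (mono x '' B) := by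
  classical
  induction S using Finset.induction_on with
  | empty =>
    intro T B _ _ hB i _ hiT r hr
    have h0 : ∀ b ∈ B, b = 0 := fun b hb => funext fun j => hB b hb j (by simp)
    by_cases h : (0 : Fin p → ℕ) ∈ B
    · have : Ideal.span (mono x '' B) = ⊤ := by
        rw [Ideal.eq_top_iff_one]
        exact Ideal.subset_span ⟨0, h, mono_zero x⟩
      rw [this]; simp
    · have : B = ∅ := by
        ext b; simp only [Set.mem_empty_iff_false, iff_false]
        intro hb; exact h (h0 b hb ▸ hb)
      subst this
      simp only [Set.image_empty, Ideal.span_empty, sup_bot_eq] at hr ⊢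
      exact reg_of_grsop x hx T i hiT r hr
  | insert j S hjS ih =>
    intro T B hTS hBn hBS i hiS hiT r hr
    have main : ∀ m : ℕ, ∀ B : Set (Fin p → ℕ), (∀ b ∈ B, b j ≤ m) →
        (∀ b ∈ B, ∀ k, b k ≤ n) → (∀ b ∈ B, ∀ k, k ∉ insert j S → b k = 0) → ∀ r : R,
        r * x i ∈ Ideal.span (x '' T) ⊔ Ideal.span (mono x '' B) →
        r ∈ Ideal.span (x '' T) ⊔ Ideal.span (mono x '' B) := by
      have hTS' : ∀ t ∈ T, t ∉ S := fun t ht h => hTS t ht (Finset.mem_insert_of_mem h)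
      have hjT : j ∉ T := fun h => hTS j h (Finset.mem_insert_self _ _)
      have hiS' : i ∉ S := fun h => hiS (Finset.mem_insert_of_mem h)
      have hij : i ≠ j := fun h => hiS (h ▸ Finset.mem_insert_self _ _)
      intro m
      induction m with
      | zero =>
        intro B hBj hBn hBS r hr
        refine ih T B hTS' hBn ?_ i hiS' hiT r hr
        intro b hb k hk
        by_cases hkj : k = j
        · subst hkj; exact Nat.le_zero.mp (hBj b hb)
        · exact hBS b hb k (by simp [hkj, hk])
      | succ m ihm =>
        intro B hBj hBn hBS r hr
        have hB0 : ∀ b ∈ B0 B j, ∀ k, k ∉ S → b k = 0 := by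
          intro b hb k hk
          by_cases hkj : k = j
          · subst hkj; exact hb.2
          · exact hBS b hb.1 k (by simp [hkj, hk])
        have hB0n : ∀ b ∈ B0 B j, ∀ k, b k ≤ n := fun b hb => hBn b hb.1
        have hKJ : Ideal.span (x '' T) ⊔ Ideal.span (mono x '' B0 B j) ≤
            Ideal.span (x '' T) ⊔ Ideal.span (mono x '' B) :=
          sup_le_sup_left (Ideal.span_mono (Set.image_mono (B0_sub B j))) _
        have split : ∀ y ∈ Ideal.span (x '' T) ⊔ Ideal.span (mono x '' B),
            ∃ k ∈ Ideal.span (x '' T) ⊔ Ideal.span (mono x '' B0 B j),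
            ∃ m ∈ Ideal.span (mono x '' B1 B j), y = k + m * x j := by
          intro y hy
          obtain ⟨u, hu, v, hv, rfl⟩ := Submodule.mem_sup.mp hy
          obtain ⟨k, hk, m, hm, rfl⟩ := span_split x B j v hv
          exact ⟨u + k, add_mem (Ideal.mem_sup_left hu) (Ideal.mem_sup_right hk), m, hm, by ring⟩
        -- step 1
        have h1 : r ∈ Ideal.span (x '' insert j T) ⊔ Ideal.span (mono x '' B0 B j) := by
          refine ih (insert j T) (B0 B j) ?_ hB0n hB0 i hiS' ?_ r ?_
          · rintro t (rfl | ht)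
            · exact hjS
            · exact hTS' t ht
          · rintro (h | h)
            · exact hij h
            · exact hiT h
          · obtain ⟨k, hk, m, hm, e⟩ := split _ hr
            rw [e]
            refine add_mem ?_ ?_
            · have hle : Ideal.span (x '' T) ⊔ Ideal.span (mono x '' B0 B j) ≤
                  Ideal.span (x '' insert j T) ⊔ Ideal.span (mono x '' B0 B j) :=
                sup_le_sup_right (Ideal.span_mono (Set.image_mono (Set.subset_insert _ _))) _
              exact hle hk
            · exact Ideal.mem_sup_left (Ideal.mul_mem_left _ _
                (Ideal.subset_span ⟨j, Set.mem_insert _ _, rfl⟩))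
        rw [Set.image_insert_eq, Ideal.span_insert, sup_assoc] at h1
        obtain ⟨u, hu, q, hq, rfl⟩ := Submodule.mem_sup.mp h1
        obtain ⟨r', rfl⟩ := Ideal.mem_span_singleton'.mp hu
        refine add_mem ?_ (hKJ hq)
        have h2 : r' * x j * x i ∈ Ideal.span (x '' T) ⊔ Ideal.span (mono x '' B) := by
          have := sub_mem hr (Ideal.mul_mem_right (x i) _ (hKJ hq))
          rwa [add_mul, add_sub_cancel_right] at this
        obtain ⟨k, hk, m', hm', e⟩ := split _ h2
        have h3 : r' * x i - m' ∈ Ideal.span (x '' T) ⊔ Ideal.span (mono x '' B0 B j) := by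
          refine ih T (B0 B j) hTS' hB0n hB0 j hjS hjT _ ?_
          have : (r' * x i - m') * x j = k := by linear_combination e
          rw [this]; exact hk
        have h4 : r' ∈ Ideal.span (x '' T) ⊔ Ideal.span (mono x '' (B0 B j ∪ B1 B j)) := by
          refine ihm _ ?_ ?_ ?_ r' ?_
          · rintro b (hb | hb)
            · rw [hb.2]; exact Nat.zero_le _
            · have := hBj _ hb
              simp [ee] at this; exact this
          · rintro b (hb | hb) k
            · exact hB0n b hb k
            · have := hBn _ hb k
              simp at this; omega
          · rintro b (hb | hb) k hk
            · exact hBS b hb.1 k hk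
            · have := hBS _ hb k hk
              simp at this; omega
          · rw [Set.image_union, Ideal.span_union, ← sup_assoc]
            have : r' * x i = (r' * x i - m') + m' := by ring
            rw [this]
            exact add_mem (Ideal.mem_sup_left h3) (Ideal.mem_sup_right hm')
        rw [Set.image_union, Ideal.span_union, ← sup_assoc] at h4
        obtain ⟨u, hu', v, hv, rfl⟩ := Submodule.mem_sup.mp h4
        rw [add_mul]
        exact add_mem (hKJ (Ideal.mul_mem_right _ _ hu'))
          (Ideal.mem_sup_right (span_B1_mul x B j v hv))
    exact main n B (fun b hb => hBn b hb j) hBn hBS r hr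

lemma colon (x : Fin p → R) (hx : IsGRSOP x) (n : ℕ) (B : Set (Fin p → ℕ))
    (hBn : ∀ b ∈ B, ∀ k, b k ≤ n) (i : Fin p) (r : R)
    (hr : r * x i ∈ Ideal.span (mono x '' B)) :
    r ∈ Ideal.span (mono x '' (B0 B i ∪ B1 B i)) := by
  classical
  obtain ⟨k, hk, m, hm, e⟩ := span_split x B i _ hr
  have h := nzd x hx n (Finset.univ.erase i) ∅ (B0 B i) (by simp)
    (fun b hb => hBn b hb.1) (fun b hb j hj => by
      have : j = i := by simpa using hj
      subst this; exact hb.2) i (by simp) (by simp) (r - m) (by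
      have : (r - m) * x i = k := by linear_combination e
      rw [this]; exact Ideal.mem_sup_right hk)
  simp only [Set.image_empty, Ideal.span_empty, bot_sup_eq] at h
  rw [Set.image_union, Ideal.span_union]
  have : r = (r - m) + m := by ring
  rw [this]
  exact add_mem (Ideal.mem_sup_left h) (Ideal.mem_sup_right hm)

lemma mono_mem_of_ne_zero (x : Fin p → R) (b : Fin p → ℕ) (hb : b ≠ 0) :
    mono x b ∈ Ideal.span (Set.range x) := by
  obtain ⟨i, hi⟩ := Function.ne_iff.mp hb
  obtain ⟨a, rfl⟩ := ee_decomp b i hi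
  rw [mono_add, mono_ee]
  exact Ideal.mul_mem_left _ _ (Ideal.subset_span ⟨i, rfl⟩)

lemma KLbdd (x : Fin p → R) (hx : IsGRSOP x) (n : ℕ) (N : ℕ) : ∀ (B : Set (Fin p → ℕ))
    (_ : ∀ b ∈ B, ∀ k, b k ≤ n) (a : Fin p → ℕ) (_ : ∑ i, a i = N) (s : R)
    (_ : s * mono x a ∈ Ideal.span (mono x '' B)) (_ : ∀ b ∈ B, ¬ b ≤ a),
    s ∈ Ideal.span (Set.range x) := by
  induction N with
  | zero =>
    intro B hBn a ha s hs hb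
    have : a = 0 := by
      funext i
      exact (Finset.sum_eq_zero_iff.mp ha) i (Finset.mem_univ _)
    subst this
    rw [mono_zero, mul_one] at hs
    refine Ideal.span_le.mpr ?_ hs
    rintro _ ⟨b, hbB, rfl⟩
    exact mono_mem_of_ne_zero x b (fun h => hb b hbB (h ▸ le_rfl))
  | succ N ih =>
    intro B hBn a ha s hs hb
    have : ∃ i, a i ≠ 0 := by
      by_contra h
      push Not at h
      simp [h] at ha
    obtain ⟨i, hi⟩ := this
    obtain ⟨a', rfl⟩ := ee_decomp a i hi
    rw [mono_add, mono_ee, ← mul_assoc] at hs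
    refine ih _ ?_ a' ?_ s (colon x hx n B hBn i _ hs) ?_
    · rintro b (hb | hb) k
      · exact hBn b hb.1 k
      · have := hBn _ hb k
        simp at this; omega
    · simp [Finset.sum_add_distrib, ee] at ha; exact ha
    · rintro b (h | h) hle
      · exact hb b h.1 (hle.trans (by intro k; simp))
      · exact hb _ h (add_le_add_left hle _)

lemma KL (x : Fin p → R) (hx : IsGRSOP x) (B : Set (Fin p → ℕ)) (a : Fin p → ℕ) (s : R)
    (hs : s * mono x a ∈ Ideal.span (mono x '' B)) (hb : ∀ b ∈ B, ¬ b ≤ a) :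
    s ∈ Ideal.span (Set.range x) := by
  obtain ⟨t, ht, c, hc⟩ := (Submodule.mem_span_image_iff_exists_fun R).mp hs
  refine KLbdd x hx (∑ b ∈ t, ∑ k, b k) _ (t : Set (Fin p → ℕ)) ?_ a rfl s ?_
    (fun b h => hb b (ht h))
  · intro b hbt k
    exact (Finset.single_le_sum (f := fun k => b k) (fun _ _ => Nat.zero_le _)
      (Finset.mem_univ k)).trans
      (Finset.single_le_sum (f := fun b : Fin p → ℕ => ∑ k, b k)
        (fun _ _ => Nat.zero_le _) hbt)
  · exact (Submodule.mem_span_image_iff_exists_fun R).mpr ⟨t, subset_rfl, c, hc⟩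

lemma dickson (U : Set (Fin p → ℕ)) : ∃ F : Finset (Fin p → ℕ), (∀ f ∈ F, f ∈ U) ∧
    (∀ u ∈ U, ∃ f ∈ F, f ≤ u) ∧ (∀ f ∈ F, ∀ u ∈ U, u ≤ f → u = f) := by
  classical
  have hfin : {a | Minimal (· ∈ U) a}.Finite :=
    WellQuasiOrderedLE.finite_of_isAntichain (setOfPred_minimal_antichain _)
  refine ⟨hfin.toFinset, ?_, ?_, ?_⟩
  · intro f hf
    have : Minimal (· ∈ U) f := by simpa using hf
    exact this.prop
  · intro u hu
    obtain ⟨m, hm, hm'⟩ := exists_minimal_le_of_wellFoundedLT (· ∈ U) u hu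
    exact ⟨m, by simpa using hm', hm⟩
  · intro f hf u hu h
    have : Minimal (· ∈ U) f := by simpa using hf
    exact le_antisymm h (this.le_of_le hu h)

/-- the ideal generated by the monomials of degree `N` -/
def Q (x : Fin p → R) (N : ℕ) : Ideal R := Ideal.span (mono x '' {b | ∑ i, b i = N})

lemma Q_le (x : Fin p → R) (N : ℕ) : Q x N ≤ Ideal.span (Set.range x) ^ N := by
  refine Ideal.span_le.mpr ?_
  rintro _ ⟨b, rfl, rfl⟩
  change mono x b ∈ _
  unfold mono
  rw [← Finset.prod_pow_eq_pow_sum]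
  refine Ideal.prod_mem_prod fun i _ => Ideal.pow_mem_pow ?_ _
  exact Ideal.subset_span ⟨i, rfl⟩

lemma mul_mem_Q (x : Fin p → R) (N : ℕ) (t : R) (ht : t ∈ Ideal.span (Set.range x))
    (b : Fin p → ℕ) (hb : ∑ i, b i = N) : t * mono x b ∈ Q x (N + 1) := by
  induction ht using Submodule.span_induction with
  | mem y hy =>
    obtain ⟨i, rfl⟩ := hy
    rw [← mono_ee x i, ← mono_add]
    refine Ideal.subset_span ⟨_, ?_, rfl⟩
    change ∑ k, (ee i + b) k = N + 1
    simp [Finset.sum_add_distrib, ee, hb, add_comm]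
  | zero => simp
  | add y z _ _ h1 h2 => rw [add_mul]; exact add_mem h1 h2
  | smul c y _ h1 => rw [smul_eq_mul, mul_assoc]; exact Ideal.mul_mem_left _ _ h1

lemma expand (x : Fin p → R) (f : R) (N : ℕ) : ∃ c : (Fin p → ℕ) →₀ R,
    (∀ a, c a ∈ Ideal.span (Set.range x) → c a = 0) ∧
    f - Finsupp.linearCombination R (mono x) c ∈ Q x N := by
  classical
  induction N with
  | zero =>
    refine ⟨0, by simp, ?_⟩
    have : Q x 0 = ⊤ := by
      rw [Ideal.eq_top_iff_one]
      exact Ideal.subset_span ⟨0, by simp, mono_zero x⟩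
    rw [this]; trivial
  | succ N ih =>
    obtain ⟨c, hc, hf⟩ := ih
    obtain ⟨d, hd, hdf⟩ := (Finsupp.mem_span_image_iff_linearCombination R).mp hf
    refine ⟨(c + d).filter (fun a => (c + d) a ∉ Ideal.span (Set.range x)), ?_, ?_⟩
    · intro a ha
      by_cases h : (c + d) a ∉ Ideal.span (Set.range x)
      · rw [Finsupp.filter_apply_pos (fun a => (c + d) a ∉ Ideal.span (Set.range x)) _ h] at ha
        exact absurd ha h
      · rw [Finsupp.filter_apply_neg (fun a => (c + d) a ∉ Ideal.span (Set.range x)) _ h]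
    · have e := Finsupp.filter_add_filter_not (c + d)
        (fun a => (c + d) a ∉ Ideal.span (Set.range x))
      have e2 := congrArg (Finsupp.linearCombination R (mono x)) e
      rw [map_add, map_add, hdf] at e2
      have e3 : f - Finsupp.linearCombination R (mono x)
          ((c + d).filter (fun a => (c + d) a ∉ Ideal.span (Set.range x))) =
          Finsupp.linearCombination R (mono x)
          ((c + d).filter (fun a => ¬ (c + d) a ∉ Ideal.span (Set.range x))) := by
        linear_combination -e2
      rw [e3, Finsupp.linearCombination_apply, Finsupp.sum]
      refine Submodule.sum_mem _ fun a ha => ?_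
      rw [Finsupp.support_filter, Finset.mem_filter, not_not] at ha
      rw [Finsupp.filter_apply_pos (fun a => ¬ (c + d) a ∉ Ideal.span (Set.range x)) _
        (not_not.mpr ha.2), smul_eq_mul]
      by_cases hda : d a = 0
      · have h1 : (c + d) a = c a := by simp [hda]
        have h2 := ha.2
        rw [h1] at h2
        rw [h1, hc a h2]; simp
      · exact mul_mem_Q x N _ ha.2 a
          ((Finsupp.mem_supported R d).mp hd (Finsupp.mem_support_iff.mpr hda))

lemma krull_loc (P : Ideal R) (hP : P.IsPrime) (hN : IsNoetherianRing (Localization.AtPrime P))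
    (K : Ideal R) (f : R) (h : ∀ N : ℕ, ∃ k ∈ K, f - k ∈ P ^ N) : ∃ s ∉ P, s * f ∈ K := by
  let L := Localization.AtPrime P
  let m := IsLocalRing.maximalIdeal L
  let M : Ideal L := K.map (algebraMap R L)
  have hk := Ideal.iInf_pow_smul_eq_bot_of_isLocalRing (M := L ⧸ M) m
    (Ideal.IsPrime.ne_top inferInstance)
  have hmem : Submodule.Quotient.mk (p := M) (algebraMap R L f) ∈
      (⨅ i : ℕ, m ^ i • ⊤ : Submodule L (L ⧸ M)) := by
    rw [Submodule.mem_iInf]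
    intro N
    obtain ⟨k, hkK, hk⟩ := h N
    have e : Submodule.Quotient.mk (p := M) (algebraMap R L f) =
        (algebraMap R L (f - k)) • Submodule.Quotient.mk (p := M) 1 := by
      rw [← Submodule.Quotient.mk_smul, Submodule.Quotient.eq, smul_eq_mul, mul_one, ← map_sub,
        sub_sub_cancel]
      exact Ideal.mem_map_of_mem _ hkK
    rw [e]
    refine Submodule.smul_mem_smul ?_ trivial
    have := Ideal.mem_map_of_mem (algebraMap R L) hk
    rw [Ideal.map_pow, Localization.AtPrime.map_eq_maximalIdeal] at this
    exact this
  rw [hk, Submodule.mem_bot, Submodule.Quotient.mk_eq_zero] at hmem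
  obtain ⟨⟨k, s⟩, hs⟩ := (IsLocalization.mem_map_algebraMap_iff P.primeCompl L).mp hmem
  simp only at hs
  rw [← map_mul] at hs
  obtain ⟨c, hc⟩ := (IsLocalization.eq_iff_exists P.primeCompl L).mp hs
  refine ⟨c * s, (c * s).2, ?_⟩
  have : (c : R) * s * f = c * k := by linear_combination hc
  rw [this]
  exact Ideal.mul_mem_left _ _ k.2

lemma prime_of_grsop (x : Fin p → R) (hx : IsGRSOP x) : (Ideal.span (Set.range x)).IsPrime := by
  have := (hx.2 Set.univ).1
  rw [Set.image_univ] at this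
  exact (Ideal.Quotient.isDomain_iff_prime _).mp this

lemma exists_rep (x : Fin p → R) (hR : IsRegularDomain R) (hx : IsGRSOP x) (f : R) :
    ∃ A : Finset (Fin p → ℕ), IsMinMonRep x f A := by
  classical
  have hP := prime_of_grsop x hx
  set P := Ideal.span (Set.range x) with hPdef
  let U : Set (Fin p → ℕ) := {a | ∃ N : ℕ, ∑ i, a i < N ∧ ∃ c : (Fin p → ℕ) →₀ R,
    (∀ a, c a ∈ P → c a = 0) ∧ f - Finsupp.linearCombination R (mono x) c ∈ Q x N ∧
    a ∈ c.support ∧ ∀ b ∈ c.support, b ≤ a → b = a}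
  obtain ⟨A, hA, hA2, hA3⟩ := dickson U
  have key : ∀ N : ℕ, ∃ k ∈ Ideal.span (mono x '' (A : Set (Fin p → ℕ))), f - k ∈ P ^ N := by
    intro N
    obtain ⟨c, hc, hf⟩ := expand x f N
    suffices h : Finsupp.linearCombination R (mono x) c ∈
        Ideal.span (mono x '' (A : Set (Fin p → ℕ))) ⊔ P ^ N by
      obtain ⟨u, hu, v, hv, e⟩ := Submodule.mem_sup.mp h
      refine ⟨u, hu, ?_⟩
      have : f - u = (f - Finsupp.linearCombination R (mono x) c) + v := by
        rw [← e]; ring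
      rw [this]
      exact add_mem (Q_le x N hf) hv
    rw [Finsupp.linearCombination_apply, Finsupp.sum]
    refine Submodule.sum_mem _ fun a ha => ?_
    rw [smul_eq_mul]
    refine Ideal.mul_mem_left _ _ ?_
    by_cases hN : ∑ i, a i < N
    · refine Ideal.mem_sup_left ?_
      obtain ⟨a', ha', hmin⟩ := exists_minimal_le_of_wellFoundedLT (· ∈ c.support) a ha
      have : a' ∈ U := by
        refine ⟨N, lt_of_le_of_lt (Finset.sum_le_sum fun i _ => ha' i) hN, c, hc, hf, hmin.prop, ?_⟩
        intro b hb hle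
        exact le_antisymm hle (hmin.le_of_le hb hle)
      obtain ⟨g, hg, hga⟩ := hA2 _ this
      obtain ⟨d, rfl⟩ := exists_add_of_le (hga.trans ha')
      rw [mono_add]
      exact Ideal.mul_mem_right _ _ (Ideal.subset_span ⟨g, hg, rfl⟩)
    · refine Ideal.mem_sup_right ?_
      exact Ideal.pow_le_pow_right (not_lt.mp hN) (Q_le x _ (Ideal.subset_span ⟨a, rfl, rfl⟩))
  obtain ⟨h, hh, hhf⟩ := krull_loc P hP (hR.2 P hP).1 _ f key
  obtain ⟨s, hs, hsf⟩ := (Finsupp.mem_span_image_iff_linearCombination R).mp hhf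
  have hsum : Finsupp.linearCombination R (mono x) s = ∑ a ∈ A, s a * mono x a := by
    rw [Finsupp.linearCombination_apply]
    exact Finsupp.sum_of_support_subset _ ((Finsupp.mem_supported R s).mp hs) _ (by simp)
  refine ⟨A, ⟨h, s, hh, ?_, by rw [← hsum, hsf]⟩, ?_⟩
  · intro a ha hsa
    obtain ⟨N, hN, c, hc, hf, hac, hamin⟩ := hA a ha
    have hca : c a ∉ P := fun h => (Finsupp.mem_support_iff.mp hac) (hc a h)
    have hsA : ∑ b ∈ A.erase a, s b * mono x b + s a * mono x a = h * f := by
      rw [Finset.sum_erase_add _ _ ha, ← hsum, hsf]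
    have hcA : ∑ b ∈ c.support.erase a, c b * mono x b + c a * mono x a =
        Finsupp.linearCombination R (mono x) c := by
      rw [Finset.sum_erase_add _ _ hac, Finsupp.linearCombination_apply, Finsupp.sum]; rfl
    have : h * c a - s a ∈ P := by
      refine KL x hx ((A.erase a : Finset _) ∪ (c.support.erase a : Finset _) ∪
        {b | ∑ i, b i = N}) a _ ?_ ?_
      · have e : (h * c a - s a) * mono x a = ∑ b ∈ A.erase a, s b * mono x b
            - h * ∑ b ∈ c.support.erase a, c b * mono x b
            - h * (f - Finsupp.linearCombination R (mono x) c) := by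
          rw [← hcA]; linear_combination -hsA
        rw [e, Set.image_union, Set.image_union, Ideal.span_union, Ideal.span_union]
        refine sub_mem (sub_mem ?_ ?_) ?_
        · refine Ideal.mem_sup_left (Ideal.mem_sup_left ?_)
          exact Submodule.sum_mem _ fun b hb => Ideal.mul_mem_left _ _
            (Ideal.subset_span ⟨b, hb, rfl⟩)
        · refine Ideal.mem_sup_left (Ideal.mem_sup_right (Ideal.mul_mem_left _ _ ?_))
          exact Submodule.sum_mem _ fun b hb => Ideal.mul_mem_left _ _
            (Ideal.subset_span ⟨b, hb, rfl⟩)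
        · exact Ideal.mem_sup_right (Ideal.mul_mem_left _ _ hf)
      · rintro b ((hb | hb) | hb) hle
        · have hb' := Finset.mem_erase.mp hb
          exact hb'.1 (hA3 a ha b (hA b hb'.2) hle)
        · have hb' := Finset.mem_erase.mp hb
          exact hb'.1 (hamin b hb'.2 hle)
        · have h1 : ∑ i, b i ≤ ∑ i, a i := Finset.sum_le_sum fun i _ => hle i
          have h2 : ∑ i, b i = N := hb
          omega
    have h2 : h * c a ∈ P := by simpa using add_mem this hsa
    exact (hP.mem_or_mem h2).elim hh hca
  · intro a ha b hb hab hdvd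
    have : (1 : R) ∈ P := by
      refine KL x hx {a} b 1 ?_ ?_
      · rw [one_mul, Set.image_singleton]
        exact Ideal.mem_span_singleton.mpr hdvd
      · rintro _ rfl hle
        exact hab (hA3 b hb _ (hA _ ha) hle)
    exact hP.ne_top ((Ideal.eq_top_iff_one _).mpr this)

lemma supp_spec (x : Fin p → R) (hR : IsRegularDomain R) (hx : IsGRSOP x) (f : R) :
    ∃ A : Finset (Fin p → ℕ), supp x f = ↑A ∧ (∀ a ∈ A, ∀ b ∈ A, a ≤ b → a = b) ∧
    ∃ (h : R) (r : (Fin p → ℕ) → R),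
    h ∉ Ideal.span (Set.range x) ∧ (∀ a ∈ A, r a ∉ Ideal.span (Set.range x)) ∧
    h * f = ∑ a ∈ A, r a * mono x a := by
  have hex := exists_rep x hR hx f
  refine ⟨hex.choose, ?_, ?_, hex.choose_spec.1⟩
  · unfold supp; rw [dif_pos hex]
  · intro a ha b hb hle
    by_contra hne
    refine hex.choose_spec.2 a ha b hb hne ?_
    obtain ⟨d, rfl⟩ := exists_add_of_le hle
    rw [mono_add]; exact dvd_mul_right _ _

/-- at an element of the support one can isolate the corresponding term -/
lemma supp_isolate (x : Fin p → R) (hR : IsRegularDomain R) (hx : IsGRSOP x) (f : R)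
    (a : Fin p → ℕ) (ha : a ∈ supp x f) : ∃ h r : R, h ∉ Ideal.span (Set.range x) ∧
    r ∉ Ideal.span (Set.range x) ∧
    h * f - r * mono x a ∈ Ideal.span (mono x '' (supp x f \ {a})) := by
  classical
  obtain ⟨A, hA, hmin, h, r, hh, hr, e⟩ := supp_spec x hR hx f
  rw [hA] at ha ⊢
  refine ⟨h, r a, hh, hr a ha, ?_⟩
  rw [e, ← Finset.sum_erase_add _ _ ha, add_sub_cancel_right]
  refine Submodule.sum_mem _ fun b hb => Ideal.mul_mem_left _ _ (Ideal.subset_span ⟨b, ?_, rfl⟩)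
  have := Finset.mem_erase.mp hb
  exact ⟨this.2, this.1⟩

lemma supp_mem_span (x : Fin p → R) (hR : IsRegularDomain R) (hx : IsGRSOP x) (f : R) :
    ∃ h : R, h ∉ Ideal.span (Set.range x) ∧ h * f ∈ Ideal.span (mono x '' supp x f) := by
  obtain ⟨A, hA, hmin, h, r, hh, hr, e⟩ := supp_spec x hR hx f
  refine ⟨h, hh, ?_⟩
  rw [hA, e]
  exact Submodule.sum_mem _ fun b hb => Ideal.mul_mem_left _ _ (Ideal.subset_span ⟨b, hb, rfl⟩)

lemma supp_antichain (x : Fin p → R) (hR : IsRegularDomain R) (hx : IsGRSOP x) (f : R)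
    (a b : Fin p → ℕ) (ha : a ∈ supp x f) (hb : b ∈ supp x f) (h : a ≤ b) : a = b := by
  obtain ⟨A, hA, hmin, -⟩ := supp_spec x hR hx f
  rw [hA] at ha hb
  exact hmin a ha b hb h

/-- (D) -/
lemma supp_above (x : Fin p → R) (hR : IsRegularDomain R) (hx : IsGRSOP x) (g : R)
    (B : Set (Fin p → ℕ)) (k : R) (hk : k ∉ Ideal.span (Set.range x))
    (hg : k * g ∈ Ideal.span (mono x '' B)) (a : Fin p → ℕ) (ha : a ∈ supp x g) :
    ∃ b ∈ B, b ≤ a := by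
  by_contra! hcon
  have hP := prime_of_grsop x hx
  obtain ⟨h, r, hh, hr, e⟩ := supp_isolate x hR hx g a ha
  have : k * r ∈ Ideal.span (Set.range x) := by
    refine KL x hx (B ∪ (supp x g \ {a})) a _ ?_ ?_
    · rw [Set.image_union, Ideal.span_union]
      have : k * r * mono x a = h * (k * g) - k * (h * g - r * mono x a) := by ring
      rw [this]
      exact sub_mem (Ideal.mem_sup_left (Ideal.mul_mem_left _ _ hg))
        (Ideal.mem_sup_right (Ideal.mul_mem_left _ _ e))
    · rintro b (hb | hb) hle
      · exact hcon b hb hle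
      · exact hb.2 (supp_antichain x hR hx g b a hb.1 ha hle)
  exact (hP.mem_or_mem this).elim hk hr

/-- (C) -/
lemma mem_supp (x : Fin p → R) (hR : IsRegularDomain R) (hx : IsGRSOP x) (g : R)
    (B : Set (Fin p → ℕ)) (c : Fin p → ℕ) (h r : R) (hh : h ∉ Ideal.span (Set.range x))
    (hr : r ∉ Ideal.span (Set.range x))
    (hg : h * g - r * mono x c ∈ Ideal.span (mono x '' B)) (hB : ∀ b ∈ B, ¬ b ≤ c) :
    c ∈ supp x g := by
  have hP := prime_of_grsop x hx
  obtain ⟨k, hk, hkg⟩ := supp_mem_span x hR hx g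
  have h1 : ∃ a ∈ supp x g, a ≤ c := by
    by_contra! hcon
    have : k * r ∈ Ideal.span (Set.range x) := by
      refine KL x hx (B ∪ supp x g) c _ ?_ ?_
      · rw [Set.image_union, Ideal.span_union]
        have : k * r * mono x c = h * (k * g) - k * (h * g - r * mono x c) := by ring
        rw [this]
        exact sub_mem (Ideal.mem_sup_right (Ideal.mul_mem_left _ _ hkg))
          (Ideal.mem_sup_left (Ideal.mul_mem_left _ _ hg))
      · rintro b (hb | hb)
        · exact hB b hb
        · exact hcon b hb
    exact (hP.mem_or_mem this).elim hk hr
  obtain ⟨a, ha, hac⟩ := h1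
  obtain ⟨b, hb, hba⟩ := supp_above x hR hx g (B ∪ {c}) h hh (by
    rw [Set.image_union, Ideal.span_union]
    have : h * g = (h * g - r * mono x c) + r * mono x c := by ring
    rw [this]
    exact add_mem (Ideal.mem_sup_left hg) (Ideal.mem_sup_right
      (Ideal.mul_mem_left _ _ (Ideal.subset_span ⟨c, rfl, rfl⟩)))) a ha
  rcases hb with hb | hb
  · exact absurd (hba.trans hac) (hB b hb)
  · have hb : b = c := hb
    subst hb
    rwa [le_antisymm hba hac]

lemma span_mul_mono (x : Fin p → R) (B C : Set (Fin p → ℕ)) (f g : R)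
    (hf : f ∈ Ideal.span (mono x '' B)) (hg : g ∈ Ideal.span (mono x '' C)) :
    f * g ∈ Ideal.span (mono x '' (B + C)) := by
  have := Ideal.mul_mem_mul hf hg
  rw [Ideal.span_mul_span'] at this
  refine Ideal.span_mono ?_ this
  rintro _ ⟨_, ⟨b, hb, rfl⟩, _, ⟨c, hc, rfl⟩, rfl⟩
  exact ⟨b + c, Set.add_mem_add hb hc, mono_add x b c⟩

/-- support of an ideal -/
def sI (x : Fin p → R) (I : Ideal R) : Set (Fin p → ℕ) := ⋃ f ∈ (I : Set R), supp x f

lemma mem_sI (x : Fin p → R) (I : Ideal R) (a : Fin p → ℕ) :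
    a ∈ sI x I ↔ ∃ f ∈ I, a ∈ supp x f := by
  simp [sI]

lemma sI_up (x : Fin p → R) (hR : IsRegularDomain R) (hx : IsGRSOP x) (I : Ideal R)
    (a d : Fin p → ℕ) (ha : a ∈ sI x I) : a + d ∈ sI x I := by
  rw [mem_sI] at ha ⊢
  obtain ⟨f, hf, ha⟩ := ha
  refine ⟨f * mono x d, Ideal.mul_mem_right _ _ hf, ?_⟩
  obtain ⟨h, r, hh, hr, e⟩ := supp_isolate x hR hx f a ha
  refine mem_supp x hR hx _ ((supp x f \ {a}) + {d}) (a + d) h r hh hr ?_ ?_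
  · have : h * (f * mono x d) - r * mono x (a + d) = (h * f - r * mono x a) * mono x d := by
      rw [mono_add]; ring
    rw [this]
    exact span_mul_mono x _ _ _ _ e (Ideal.subset_span ⟨d, rfl, rfl⟩)
  · rintro _ ⟨b, hb, _, rfl, rfl⟩ hle
    exact hb.2 (supp_antichain x hR hx f b a hb.1 ha (le_of_add_le_add_right hle))

lemma sI_mul_sub (x : Fin p → R) (hR : IsRegularDomain R) (hx : IsGRSOP x) (I J : Ideal R) :
    sI x (I * J) ⊆ sI x I + sI x J := by
  have hP := prime_of_grsop x hx
  intro c hc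
  obtain ⟨f, hf, hc⟩ := (mem_sI _ _ _).mp hc
  have : ∃ h : R, h ∉ Ideal.span (Set.range x) ∧
      h * f ∈ Ideal.span (mono x '' (sI x I + sI x J)) := by
    clear hc
    induction hf using Submodule.mul_induction_on' with
    | mem_mul_mem u hu v hv =>
      obtain ⟨h, hh, e⟩ := supp_mem_span x hR hx u
      obtain ⟨k, hk, e'⟩ := supp_mem_span x hR hx v
      refine ⟨h * k, fun hm => (hP.mem_or_mem hm).elim hh hk, ?_⟩
      rw [mul_mul_mul_comm]
      refine Ideal.span_mono (Set.image_mono ?_) (span_mul_mono x _ _ _ _ e e')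
      exact Set.add_subset_add (fun a ha => (mem_sI _ _ _).mpr ⟨u, hu, ha⟩)
        (fun a ha => (mem_sI _ _ _).mpr ⟨v, hv, ha⟩)
    | add u _ v _ h1 h2 =>
      obtain ⟨h, hh, e⟩ := h1
      obtain ⟨k, hk, e'⟩ := h2
      refine ⟨h * k, fun hm => (hP.mem_or_mem hm).elim hh hk, ?_⟩
      have : h * k * (u + v) = k * (h * u) + h * (k * v) := by ring
      rw [this]
      exact add_mem (Ideal.mul_mem_left _ _ e) (Ideal.mul_mem_left _ _ e')
  obtain ⟨h, hh, e⟩ := this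
  obtain ⟨_, ⟨u, hu, v, hv, rfl⟩, hle⟩ := supp_above x hR hx f _ h hh e c hc
  obtain ⟨d, rfl⟩ := exists_add_of_le hle
  refine ⟨u + d, sI_up x hR hx I u d hu, v, hv, ?_⟩
  simp only; ring

lemma toR_add (a b : Fin p → ℕ) : toR (a + b) = toR a + toR b := by
  funext i; simp [toR]

lemma toR_image_add (U V : Set (Fin p → ℕ)) : toR '' (U + V) = toR '' U + toR '' V := by
  ext z
  constructor
  · rintro ⟨_, ⟨a, ha, b, hb, rfl⟩, rfl⟩
    exact ⟨_, ⟨a, ha, rfl⟩, _, ⟨b, hb, rfl⟩, (toR_add a b).symm⟩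
  · rintro ⟨_, ⟨a, ha, rfl⟩, _, ⟨b, hb, rfl⟩, rfl⟩
    exact ⟨a + b, Set.add_mem_add ha hb, toR_add a b⟩

lemma nonneg_sub_hull (y : Fin p → ℝ) (hy : 0 ≤ y) :
    y ∈ convexHull ℝ (toR '' (Set.univ : Set (Fin p → ℕ))) := by
  have e : toR '' (Set.univ : Set (Fin p → ℕ)) =
      Set.univ.pi (fun _ : Fin p => Set.range (Nat.cast : ℕ → ℝ)) := by
    ext z
    constructor
    · rintro ⟨a, -, rfl⟩ i _
      exact ⟨a i, rfl⟩
    · intro hz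
      choose a ha using fun i => hz i trivial
      exact ⟨a, trivial, funext ha⟩
  rw [e, convexHull_pi]
  intro i _
  have h0 : (0 : ℝ) ∈ convexHull ℝ (Set.range (Nat.cast : ℕ → ℝ)) :=
    subset_convexHull _ _ ⟨0, by simp⟩
  have h1 : ((⌈y i⌉₊ : ℕ) : ℝ) ∈ convexHull ℝ (Set.range (Nat.cast : ℕ → ℝ)) :=
    subset_convexHull _ _ ⟨_, rfl⟩
  exact (convex_convexHull ℝ _).ordConnected.out h0 h1 ⟨hy i, Nat.le_ceil _⟩

lemma separation (W : Set (Fin p → ℕ)) (hW : ∀ a ∈ W, ∀ d, a + d ∈ W) (z : Fin p → ℝ)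
    (hz : z ∉ convexHull ℝ (toR '' W)) :
    ∃ w : Fin p → ℝ, 0 ≤ w ∧ ∀ c ∈ W, ∑ i, z i * w i < ∑ i, toR c i * w i := by
  classical
  by_cases hne : W.Nonempty
  swap
  · exact ⟨0, le_rfl, fun c hc => absurd ⟨c, hc⟩ hne⟩
  obtain ⟨F, hF, hF2, -⟩ := dickson W
  let C : Set (Fin p → ℝ) := convexHull ℝ (toR '' (F : Set (Fin p → ℕ))) + Set.Ici 0
  have hCcl : IsClosed C :=
    isClosed_Ici.add_left_of_isCompact (Set.Finite.isCompact_convexHull ℝ (F.finite_toSet.image _))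
  have hCcv : Convex ℝ C := (convex_convexHull ℝ _).add (convex_Ici (𝕜 := ℝ) 0)
  have hzC : z ∉ C := by
    intro h
    apply hz
    have hsub : C ⊆ convexHull ℝ (toR '' W) := by
      have h1 : C ⊆ convexHull ℝ (toR '' W) + convexHull ℝ (toR '' Set.univ) :=
        Set.add_subset_add (convexHull_mono (Set.image_mono hF)) fun y hy => nonneg_sub_hull y hy
      rw [← convexHull_add, ← toR_image_add] at h1
      refine h1.trans (convexHull_mono (Set.image_mono ?_))
      rintro _ ⟨a, ha, d, -, rfl⟩
      exact hW a ha d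
    exact hsub h
  have hWC : ∀ c ∈ W, toR c ∈ C := by
    intro c hc
    obtain ⟨f, hf, hle⟩ := hF2 c hc
    obtain ⟨d, rfl⟩ := exists_add_of_le hle
    rw [toR_add]
    refine Set.add_mem_add (subset_convexHull _ _ ⟨f, hf, rfl⟩) ?_
    intro i; simp [toR]
  obtain ⟨φ, u, h1, h2⟩ := geometric_hahn_banach_point_closed hCcv hCcl hzC
  have hφ : ∀ y : Fin p → ℝ, φ y = ∑ i, y i * φ (fun j => if i = j then 1 else 0) := by
    intro y
    have := LinearMap.pi_apply_eq_sum_univ (φ : (Fin p → ℝ) →ₗ[ℝ] ℝ) y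
    simpa using this
  refine ⟨fun i => φ (fun j => if i = j then 1 else 0), ?_, ?_⟩
  · intro i
    by_contra hneg
    have hneg : φ (fun j => if i = j then 1 else 0) < 0 := not_le.mp hneg
    obtain ⟨a, ha⟩ := hne
    obtain ⟨n, hn⟩ := exists_nat_gt ((φ (toR a) - u) / (- φ (fun j => if i = j then 1 else 0)))
    have h3 := h2 _ (hWC _ (hW a ha (n • ee i)))
    have e : toR (n • ee i) = (n : ℝ) • (fun j => if i = j then 1 else 0 : Fin p → ℝ) := by
      funext j
      by_cases h : i = j
      · subst h; simp [toR, ee]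
      · simp [toR, ee, h, Ne.symm h]
    rw [toR_add, map_add, e, map_smul, smul_eq_mul] at h3
    rw [div_lt_iff₀ (by linarith)] at hn
    linarith
  · intro c hc
    have h3 := h2 _ (hWC c hc)
    rw [hφ] at h1 h3
    exact h1.trans h3

lemma pick (w : Fin p → ℝ) (hw : 0 ≤ w) (U V : Set (Fin p → ℕ)) (hU : U.Nonempty)
    (hV : V.Nonempty) : ∃ a₀ ∈ U, ∃ b₀ ∈ V,
    (∀ a ∈ U, ∑ i, toR a₀ i * w i ≤ ∑ i, toR a i * w i) ∧
    (∀ b ∈ V, ∑ i, toR b₀ i * w i ≤ ∑ i, toR b i * w i) ∧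
    ∀ a ∈ U, ∀ b ∈ V, a + b ≤ a₀ + b₀ → a = a₀ ∧ b = b₀ := by
  let k : (Fin p → ℕ) → ℝ ×ₗ Lex (Fin p → ℕ) := fun a => toLex (∑ i, toR a i * w i, toLex a)
  have kadd : ∀ a b, k (a + b) = k a + k b := by
    intro a b
    have : ∑ i, toR (a + b) i * w i = ∑ i, toR a i * w i + ∑ i, toR b i * w i := by
      rw [← Finset.sum_add_distrib]
      refine Finset.sum_congr rfl fun i _ => ?_
      rw [toR_add, Pi.add_apply, add_mul]
    simp only [k, this]
    rfl
  have kmono : ∀ a b, a ≤ b → k a ≤ k b := by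
    intro a b h
    have h1 : ∑ i, toR a i * w i ≤ ∑ i, toR b i * w i := by
      refine Finset.sum_le_sum fun i _ => mul_le_mul_of_nonneg_right ?_ (hw i)
      exact Nat.cast_le.mpr (h i)
    exact Prod.Lex.toLex_mono ⟨h1, Pi.toLex_monotone h⟩
  have kinj : ∀ a b, k a = k b → a = b := by
    intro a b h
    have := congrArg (fun z => ofLex (ofLex z).2) h
    exact this
  have kfst : ∀ a b, k a ≤ k b → ∑ i, toR a i * w i ≤ ∑ i, toR b i * w i := by
    intro a b h
    have := Prod.Lex.monotone_fst _ _ h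
    exact this
  have hmin : ∀ U : Set (Fin p → ℕ), U.Nonempty → ∃ a₀ ∈ U, ∀ a ∈ U, k a₀ ≤ k a := by
    intro U hU
    obtain ⟨F, hF, hF2, -⟩ := dickson U
    obtain ⟨u, hu⟩ := hU
    obtain ⟨f, hf, -⟩ := hF2 u hu
    obtain ⟨m, hm, hm2⟩ := F.exists_min_image k ⟨f, hf⟩
    refine ⟨m, hF m hm, fun a ha => ?_⟩
    obtain ⟨f, hf, hfa⟩ := hF2 a ha
    exact (hm2 f hf).trans (kmono _ _ hfa)
  obtain ⟨a₀, ha₀, ha⟩ := hmin U hU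
  obtain ⟨b₀, hb₀, hb⟩ := hmin V hV
  refine ⟨a₀, ha₀, b₀, hb₀, fun a h => kfst _ _ (ha a h), fun b h => kfst _ _ (hb b h), ?_⟩
  intro a h b h' hle
  have h1 := kmono _ _ hle
  rw [kadd, kadd] at h1
  constructor
  · apply kinj
    by_contra hne
    exact absurd h1 (not_le.mpr (add_lt_add_of_lt_of_le (lt_of_le_of_ne (ha a h) (Ne.symm hne)) (hb b h')))
  · apply kinj
    by_contra hne
    exact absurd h1 (not_le.mpr (add_lt_add_of_le_of_lt (ha a h) (lt_of_le_of_ne (hb b h') (Ne.symm hne))))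

lemma add_sub_hull (x : Fin p → R) (hR : IsRegularDomain R) (hx : IsGRSOP x) (I J : Ideal R)
    (a b : Fin p → ℕ) (ha : a ∈ sI x I) (hb : b ∈ sI x J) :
    toR (a + b) ∈ convexHull ℝ (toR '' sI x (I * J)) := by
  have hP := prime_of_grsop x hx
  by_contra hcon
  obtain ⟨w, hw, hlt⟩ := separation _ (fun a ha d => sI_up x hR hx (I * J) a d ha) _ hcon
  obtain ⟨a₀, ha₀, b₀, hb₀, h1, h2, h3⟩ := pick w hw _ _ ⟨a, ha⟩ ⟨b, hb⟩
  have hsum : ∀ a b : Fin p → ℕ, ∑ i, toR (a + b) i * w i =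
      ∑ i, toR a i * w i + ∑ i, toR b i * w i := by
    intro a b
    rw [← Finset.sum_add_distrib]
    refine Finset.sum_congr rfl fun i _ => ?_
    rw [toR_add, Pi.add_apply, add_mul]
  have hmem : a₀ + b₀ ∈ sI x (I * J) := by
    obtain ⟨f, hf, hfa⟩ := (mem_sI _ _ _).mp ha₀
    obtain ⟨g, hg, hgb⟩ := (mem_sI _ _ _).mp hb₀
    refine (mem_sI _ _ _).mpr ⟨f * g, Ideal.mul_mem_mul hf hg, ?_⟩
    obtain ⟨h, r, hh, hr, e⟩ := supp_isolate x hR hx f a₀ hfa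
    obtain ⟨k, s, hk, hs, e'⟩ := supp_isolate x hR hx g b₀ hgb
    have e'' : k * g ∈ Ideal.span (mono x '' supp x g) := by
      have : k * g = (k * g - s * mono x b₀) + s * mono x b₀ := by ring
      rw [this]
      exact add_mem (Ideal.span_mono (Set.image_mono Set.sdiff_subset) e')
        (Ideal.mul_mem_left _ _ (Ideal.subset_span ⟨b₀, hgb, rfl⟩))
    have hfI : ∀ u ∈ supp x f, u ∈ sI x I := fun u hu => (mem_sI _ _ _).mpr ⟨f, hf, hu⟩
    have hgJ : ∀ u ∈ supp x g, u ∈ sI x J := fun u hu => (mem_sI _ _ _).mpr ⟨g, hg, hu⟩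
    refine mem_supp x hR hx _ (((supp x f \ {a₀}) + supp x g) ∪ ({a₀} + (supp x g \ {b₀})))
      (a₀ + b₀) (h * k) (r * s) (fun hm => (hP.mem_or_mem hm).elim hh hk)
      (fun hm => (hP.mem_or_mem hm).elim hr hs) ?_ ?_
    · rw [Set.image_union, Ideal.span_union]
      have : h * k * (f * g) - r * s * mono x (a₀ + b₀) =
          (h * f - r * mono x a₀) * (k * g) + r * (mono x a₀ * (k * g - s * mono x b₀)) := by
        rw [mono_add]; ring
      rw [this]
      exact add_mem (Ideal.mem_sup_left (span_mul_mono x _ _ _ _ e e''))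
        (Ideal.mem_sup_right (Ideal.mul_mem_left _ _
          (span_mul_mono x _ _ _ _ (Ideal.subset_span ⟨a₀, rfl, rfl⟩) e')))
    · rintro _ (⟨u, hu, v, hv, rfl⟩ | ⟨u, hu, v, hv, rfl⟩) hle
      · exact hu.2 (h3 u (hfI u hu.1) v (hgJ v hv) hle).1
      · have hu : u = a₀ := hu
        subst hu
        exact hv.2 (h3 u ha₀ v (hgJ v hv.1) hle).2
  have h4 := hlt _ hmem
  rw [hsum, hsum] at h4
  have := h1 a ha
  have := h2 b hb
  linarith

/-- `Γ_x(IJ) = Γ_x(I) + Γ_x(J)`, Minkowski sum. -/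
theorem newtonPolyhedron_ideal_mul {R : Type*} [CommRing R] {p : ℕ}
    (x : Fin p → R) (hR : IsRegularDomain R) (hx : IsGRSOP x) (I J : Ideal R) :
    ΓI x (I * J) = ΓI x I + ΓI x J := by
  change convexHull ℝ (toR '' sI x (I * J)) =
    convexHull ℝ (toR '' sI x I) + convexHull ℝ (toR '' sI x J)
  rw [← convexHull_add, ← toR_image_add]
  refine subset_antisymm
    (convexHull_mono (Set.image_mono (sI_mul_sub x hR hx I J)))
    (convexHull_min ?_ (convex_convexHull ℝ _))
  rintro _ ⟨_, ⟨a, ha, b, hb, rfl⟩, rfl⟩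
  exact add_sub_hull x hR hx I J a b ha hb

end NND
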